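/- Let P ⊆ ℝ^d be a d-dimensional simplicial reflexive polytope with exactly 3d−1 vertices, and let F be a special facet of P. Then H_P(F,i) = ∅ for all i ≥ 2 and all i ≤ −3, |H_P(F,1)| = d, and the triple (|H_P(F,0)|, |H_P(F,−1)|, |H_P(F,−2)|) is one of (d, d−2, 1), (d−1, d, 0), (d, d−1, 0). In the first two cases ν_P = 0, and in the third case ν_P is a lattice point on the facet F. -/

import Mathlib

noncomputable section

/-- The standard inner product on `ℝ^d`. -/
def dotp {d : ℕ} (x y : Fin d → ℝ) : ℝ := ∑ i, x i * y i

/-- `x` is a point of the lattice `ℤ^d`. -/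
def IsLP {d : ℕ} (x : Fin d → ℝ) : Prop := ∀ i, ∃ n : ℤ, x i = (n : ℝ)

/-- A lattice polytope: convex hull of finitely many lattice points. -/
def IsLatticePolytope {d : ℕ} (P : Set (Fin d → ℝ)) : Prop :=
  ∃ V : Finset (Fin d → ℝ), (∀ v ∈ V, IsLP v) ∧ P = convexHull ℝ (V : Set (Fin d → ℝ))

/-- The dual polytope `P* = {x | ⟨x,y⟩ ≤ 1 ∀ y ∈ P}`. -/
def dualPolytope {d : ℕ} (P : Set (Fin d → ℝ)) : Set (Fin d → ℝ) :=
  {x | ∀ y ∈ P, dotp x y ≤ 1}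

/-- `P` is a reflexive polytope: a (`d`-dimensional) lattice polytope with `0` in its
interior whose dual is again a lattice polytope. -/
def IsReflexive {d : ℕ} (P : Set (Fin d → ℝ)) : Prop :=
  IsLatticePolytope P ∧ (0 : Fin d → ℝ) ∈ interior P ∧ IsLatticePolytope (dualPolytope P)

/-- `F` is a facet of `P` with (uniquely determined) outer normal `u`, normalized by
`⟨u, F⟩ = 1` (possible since `0` is in the interior of `P`). -/
def IsFacetNormal {d : ℕ} (P F : Set (Fin d → ℝ)) (u : Fin d → ℝ) : Prop :=
  F.Nonempty ∧ (∀ y ∈ P, dotp u y ≤ 1) ∧ F = {y ∈ P | dotp u y = 1} ∧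
    Module.finrank ℝ (vectorSpan ℝ F) = d - 1

/-- `F` is a facet of `P`. -/
def IsFacet {d : ℕ} (P F : Set (Fin d → ℝ)) : Prop := ∃ u, IsFacetNormal P F u

/-- `P` is simplicial: every facet has exactly `d` vertices. -/
def IsSimplicial {d : ℕ} (P : Set (Fin d → ℝ)) : Prop :=
  ∀ F, IsFacet P F → (Set.extremePoints ℝ F).ncard = d

/-!
Since `P` is simplicial and reflexive, every facet `F` has `d` vertices and an integral normal `u`,
so each vertex of `P` has an integral height `⟨u, v⟩ ≤ 1` over `F`. Tilting `F` about the ridge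
opposite to one of its vertices gives a neighbouring facet. A vertex of height `0` beyond that ridge
has positive, hence unit, height over the neighbouring facet, which has only one vertex off the
ridge; so there is at most one such vertex per ridge, and at most `d` vertices of height `0`.

Counting vertices against heights then shows that the total height `⟨u, ν_P⟩`, the deficiency
`d - |H_P(F, 0)|` and the excess depth `∑ (-1 - ⟨u, v⟩)` over the vertices of height at most `-2`
add up to `1`. For a special facet these are nonnegative integers, so exactly one of them is `1`:
these are the three cases.
-/

open Module (Basis finrank finrank_fin_fun)
open Submodule Set
open scoped Finset Matrix

section LinearAlgebra

variable {K E : Type*} [Field K] [AddCommGroup E] [Module K E]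

theorem vectorSpan_le_ker_of_forall_eq (f : E →ₗ[K] K) {s : Set E} {c : K}
    (hs : ∀ y ∈ s, f y = c) : vectorSpan K s ≤ LinearMap.ker f := by
  rw [vectorSpan_def, span_le]
  rintro _ ⟨a, ha, b, hb, rfl⟩
  simp [hs a ha, hs b hb]

theorem vectorSpan_sup_span_singleton {s : Set E} {x : E} (hx : x ∈ s) :
    vectorSpan K s ⊔ span K {x} = span K s := by
  apply le_antisymm
  · refine sup_le ?_ (span_mono (singleton_subset_iff.2 hx))
    rw [vectorSpan_def, span_le]
    rintro _ ⟨a, ha, b, hb, rfl⟩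
    exact sub_mem (subset_span ha) (subset_span hb)
  · rw [span_le]
    intro y hy
    rw [← sub_add_cancel y x]
    exact add_mem_sup (vsub_mem_vectorSpan K hy hx) (mem_span_singleton_self x)

theorem finrank_vectorSpan_add_one_of_forall_eq [FiniteDimensional K E] (f : E →ₗ[K] K)
    {s : Set E} {c : K} (hc : c ≠ 0) (hs : ∀ y ∈ s, f y = c) (hne : s.Nonempty) :
    finrank K (vectorSpan K s) + 1 = finrank K (span K s) := by
  obtain ⟨x, hx⟩ := hne
  have hx0 : x ≠ 0 := by
    rintro rfl
    exact hc (by rw [← hs 0 hx, map_zero])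
  have hdisj : Disjoint (vectorSpan K s) (span K {x}) := by
    rw [disjoint_span_singleton' hx0]
    intro hmem
    have := vectorSpan_le_ker_of_forall_eq f hs hmem
    exact hc (by rw [← hs x hx, LinearMap.mem_ker.1 this])
  rw [← vectorSpan_sup_span_singleton hx, ← finrank_span_singleton (K := K) hx0,
    ← finrank_sup_add_finrank_inf_eq, hdisj.eq_bot, finrank_bot, add_zero]

theorem span_insert_sdiff_singleton_eq_top {s : Set E} {v w : E} (hs : span K s = ⊤)
    (f : E →ₗ[K] K) (hf : ∀ b ∈ s, b ≠ v → f b = 0) (hw : f w ≠ 0) :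
    span K (insert w (s \ {v})) = ⊤ := by
  have hw_top : w ∈ span K (insert v (s \ {v})) :=
    span_mono (subset_insert_sdiff_singleton v s) (hs ▸ mem_top)
  have hw_ridge : w ∉ span K (s \ {v}) := fun h =>
    hw (LinearMap.mem_ker.1 (span_le.2 (fun b hb => hf b hb.1 hb.2) h))
  have hv : v ∈ span K (insert w (s \ {v})) := mem_span_insert_exchange hw_top hw_ridge
  rw [eq_top_iff, ← hs, span_le]
  intro b hb
  rcases eq_or_ne b v with rfl | hbv
  · exact hv
  · exact subset_span (mem_insert_of_mem w ⟨hb, hbv⟩)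

variable [LinearOrder K] [IsStrictOrderedRing K]

theorem exists_repr_neg_of_map_nonpos {ι : Type*} (b : Basis ι K E) (f : E →ₗ[K] K)
    (hf : ∀ i, 0 < f (b i)) {x : E} (hx : x ≠ 0) (hfx : f x ≤ 0) : ∃ i, b.repr x i < 0 := by
  by_contra! hrepr
  have hsum : f x = ∑ i ∈ (b.repr x).support, b.repr x i * f (b i) := by
    conv_lhs => rw [← b.linearCombination_repr x, Finsupp.linearCombination_apply, Finsupp.sum]
    simp
  have hpos : 0 < ∑ i ∈ (b.repr x).support, b.repr x i * f (b i) :=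
    Finset.sum_pos
      (fun i hi => mul_pos ((hrepr i).lt_of_ne' (Finsupp.mem_support_iff.1 hi)) (hf i))
      (Finsupp.support_nonempty_iff.2 (by simpa using hx))
  exact (hsum ▸ hpos).not_ge hfx

end LinearAlgebra

theorem exists_pos_sub_mul_le {α K : Type*} [Field K] [LinearOrder K] [IsStrictOrderedRing K]
    {V : Set α} (hV : V.Finite) {f g : α → K} {c : K} (hf : ∀ z ∈ V, f z ≤ c)
    (hfg : ∀ z ∈ V, g z < 0 → f z < c) (hg : ∃ x ∈ V, g x < 0) :
    ∃ s > 0, (∀ z ∈ V, f z - s * g z ≤ c) ∧ ∃ w ∈ V, g w < 0 ∧ f w - s * g w = c := by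
  obtain ⟨w, ⟨hwV, hgw⟩, hmin⟩ := exists_min_image {z ∈ V | g z < 0}
    (fun z => (c - f z) / (-g z)) (hV.subset (sep_subset V _)) hg
  have hs : 0 < (c - f w) / (-g w) := div_pos (sub_pos.2 (hfg w hwV hgw)) (neg_pos.2 hgw)
  refine ⟨(c - f w) / (-g w), hs, fun z hz => ?_, w, hwV, hgw, ?_⟩
  · rcases lt_or_ge (g z) 0 with hgz | hgz
    · have := hmin z ⟨hz, hgz⟩
      rw [le_div_iff₀ (neg_pos.2 hgz)] at this
      linarith
    · linarith [hf z hz, mul_nonneg hs.le hgz]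
  · have := div_mul_cancel₀ (c - f w) (neg_ne_zero.2 hgw.ne)
    linarith

theorem convexHull_extremePoints_eq_of_finite {E : Type*} [AddCommGroup E] [Module ℝ E]
    [TopologicalSpace E] [T2Space E] [IsTopologicalAddGroup E] [ContinuousSMul ℝ E]
    [LocallyConvexSpace ℝ E] {s : Set E} (hs : IsCompact s) (hconv : Convex ℝ s)
    (hfin : (extremePoints ℝ s).Finite) : convexHull ℝ (extremePoints ℝ s) = s := by
  rw [← (hfin.isClosed_convexHull ℝ).closure_eq, closure_convexHull_extremePoints hs hconv]

section Counting

variable {α : Type*} {V : Finset α} {h : α → ℤ}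

theorem card_add_sum_add_sum_filter_le_neg_two (hle : ∀ v ∈ V, h v ≤ 1) :
    (#V : ℤ) + ∑ v ∈ V, h v + ∑ v ∈ V with h v ≤ -2, (-1 - h v) =
      2 * #{v ∈ V | h v = 1} + #{v ∈ V | h v = 0} := by
  simp only [Finset.card_eq_sum_ones, Finset.sum_filter, Nat.cast_sum, Nat.cast_ite, Nat.cast_one,
    Nat.cast_zero, Finset.mul_sum, ← Finset.sum_add_distrib]
  refine Finset.sum_congr rfl fun v hv => ?_
  have := hle v hv
  split_ifs <;> omega

theorem card_eq_card_levels (hle : ∀ v ∈ V, h v ≤ 1) (hge : ∀ v ∈ V, -2 ≤ h v) :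
    #V = #{v ∈ V | h v = 1} + #{v ∈ V | h v = 0} + #{v ∈ V | h v = -1} +
      #{v ∈ V | h v = -2} := by
  simp only [Finset.card_eq_sum_ones, Finset.sum_filter, ← Finset.sum_add_distrib]
  refine Finset.sum_congr rfl fun v hv => ?_
  have := hle v hv
  have := hge v hv
  split_ifs <;> omega

theorem card_levels_of_card_eq {d : ℕ} (hle : ∀ v ∈ V, h v ≤ 1) (hd : 0 < d)
    (hcard : #V = 3 * d - 1) (h1 : #{v ∈ V | h v = 1} = d) (h0 : #{v ∈ V | h v = 0} ≤ d)
    (hsum : 0 ≤ ∑ v ∈ V, h v) :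
    (∀ v ∈ V, -2 ≤ h v) ∧
    ((#{v ∈ V | h v = 0} = d ∧ #{v ∈ V | h v = -1} = d - 2 ∧
        #{v ∈ V | h v = -2} = 1 ∧ ∑ v ∈ V, h v = 0) ∨
      (#{v ∈ V | h v = 0} = d - 1 ∧ #{v ∈ V | h v = -1} = d ∧
        #{v ∈ V | h v = -2} = 0 ∧ ∑ v ∈ V, h v = 0) ∨
      (#{v ∈ V | h v = 0} = d ∧ #{v ∈ V | h v = -1} = d - 1 ∧
        #{v ∈ V | h v = -2} = 0 ∧ ∑ v ∈ V, h v = 1)) := by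
  have hbalance : ∑ v ∈ V, h v + ∑ v ∈ V with h v ≤ -2, (-1 - h v) +
      ((d : ℤ) - #{v ∈ V | h v = 0}) = 1 := by
    have := card_add_sum_add_sum_filter_le_neg_two hle
    omega
  have hge : ∀ v ∈ V, -2 ≤ h v := by
    intro v hv
    by_contra! hlt
    have hdepth : -1 - h v ≤ ∑ v ∈ V with h v ≤ -2, (-1 - h v) :=
      Finset.single_le_sum (f := fun v => -1 - h v)
        (fun w hw => by have := (Finset.mem_filter.1 hw).2; omega)
        (Finset.mem_filter.2 ⟨hv, by omega⟩)
    omega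
  have hdeep : ∑ v ∈ V with h v ≤ -2, (-1 - h v) = #{v ∈ V | h v = -2} := by
    simp only [Finset.card_eq_sum_ones, Finset.sum_filter, Nat.cast_sum, Nat.cast_ite,
      Nat.cast_one, Nat.cast_zero]
    refine Finset.sum_congr rfl fun v hv => ?_
    have := hge v hv
    split_ifs <;> omega
  have := card_eq_card_levels hle hge
  exact ⟨hge, by omega⟩

end Counting

section Lattice

variable {d : ℕ}

theorem dotProductEquiv_apply_eq_dotp (u x : Fin d → ℝ) :
    dotProductEquiv ℝ (Fin d) u x = dotp u x := rfl

theorem dotp_sub_smul (u g x : Fin d → ℝ) (s : ℝ) :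
    dotp (u - s • g) x = dotp u x - s * dotp g x := by
  simp only [← dotProductEquiv_apply_eq_dotp, map_sub, map_smul, LinearMap.sub_apply,
    LinearMap.smul_apply, smul_eq_mul]

theorem IsLP.exists_int_dotp_eq {x y : Fin d → ℝ} (hx : IsLP x) (hy : IsLP y) :
    ∃ n : ℤ, dotp x y = n := by
  choose a ha using hx
  choose b hb using hy
  exact ⟨∑ i, a i * b i, by simp [dotp, ha, hb]⟩

theorem isLP_sum {V : Finset (Fin d → ℝ)} (hV : ∀ v ∈ V, IsLP v) : IsLP (∑ v ∈ V, v) := by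
  intro i
  choose! n hn using hV
  exact ⟨∑ v ∈ V, n v i, by
    rw [Finset.sum_apply, Int.cast_sum]
    exact Finset.sum_congr rfl fun v hv => hn v hv i⟩

namespace IsLatticePolytope

variable {P : Set (Fin d → ℝ)}

theorem isCompact (hP : IsLatticePolytope P) : IsCompact P := by
  obtain ⟨W, -, rfl⟩ := hP
  exact W.finite_toSet.isCompact_convexHull ℝ

theorem convex (hP : IsLatticePolytope P) : Convex ℝ P := by
  obtain ⟨W, -, rfl⟩ := hP
  exact convex_convexHull ℝ _

theorem finite_extremePoints (hP : IsLatticePolytope P) : (extremePoints ℝ P).Finite := by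
  obtain ⟨W, -, rfl⟩ := hP
  exact W.finite_toSet.subset extremePoints_convexHull_subset

theorem isLP_of_mem_extremePoints (hP : IsLatticePolytope P) {v : Fin d → ℝ}
    (hv : v ∈ extremePoints ℝ P) : IsLP v := by
  obtain ⟨W, hW, rfl⟩ := hP
  exact hW v (extremePoints_convexHull_subset hv)

end IsLatticePolytope

theorem IsLatticePolytope.dotp_le_of_extremePoints {P : Set (Fin d → ℝ)}
    (hP : IsLatticePolytope P) {u : Fin d → ℝ} {c : ℝ}
    (hu : ∀ v ∈ extremePoints ℝ P, dotp u v ≤ c) : ∀ y ∈ P, dotp u y ≤ c := by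
  have hhull := convexHull_extremePoints_eq_of_finite hP.isCompact hP.convex
    hP.finite_extremePoints
  have hhalf : P ⊆ dotProductEquiv ℝ (Fin d) u ⁻¹' Iic c := by
    rw [← hhull]
    exact convexHull_min hu ((convex_Iic c).linear_preimage _)
  exact hhalf

end Lattice

section Facets

variable {d : ℕ} {P F : Set (Fin d → ℝ)} {u g v : Fin d → ℝ}

/-- The set `H_P(F, i)` of vertices of `P` on the hyperplane `H(F, i)`; the facet `F` enters only
through its normal `u`. -/
def vertexLevel (P : Set (Fin d → ℝ)) (u : Fin d → ℝ) (i : ℝ) : Set (Fin d → ℝ) :=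
  {v ∈ extremePoints ℝ P | dotp u v = i}

theorem IsLatticePolytope.finite_vertexLevel (hP : IsLatticePolytope P) (u : Fin d → ℝ) (i : ℝ) :
    (vertexLevel P u i).Finite :=
  hP.finite_extremePoints.subset (sep_subset _ _)

theorem mem_extremePoints_dualPolytope_of_span_eq_top (hu : u ∈ dualPolytope P)
    (hspan : span ℝ {y ∈ P | dotp u y = 1} = ⊤) :
    u ∈ extremePoints ℝ (dualPolytope P) := by
  rw [mem_extremePoints_iff_left]
  refine ⟨hu, ?_⟩
  rintro a ha b hb ⟨α, β, hα, hβ, hαβ, hcomb⟩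
  have hagree : ∀ y ∈ {y ∈ P | dotp u y = 1}, dotp a y = dotp u y := by
    rintro y ⟨hyP, hy⟩
    have hcomb_y : α * dotp a y + β * dotp b y = 1 := by
      rw [← hy, ← hcomb]
      simp only [← dotProductEquiv_apply_eq_dotp, map_add, map_smul, LinearMap.add_apply,
        LinearMap.smul_apply, smul_eq_mul]
    have hay := ha y hyP
    have hby := hb y hyP
    rw [hy]
    refine le_antisymm hay (le_of_mul_le_mul_left ?_ hα)
    linarith [mul_le_mul_of_nonneg_left hby hβ.le]
  exact (dotProductEquiv ℝ (Fin d)).injective (LinearMap.ext_on hspan hagree)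

theorem isFacetNormal_iff_span_eq_top :
    IsFacetNormal P F u ↔
      F.Nonempty ∧ (∀ y ∈ P, dotp u y ≤ 1) ∧ F = {y ∈ P | dotp u y = 1} ∧ span ℝ F = ⊤ := by
  refine and_congr_right fun hne => and_congr_right fun _ => and_congr_right fun hF => ?_
  have hrank := finrank_vectorSpan_add_one_of_forall_eq (dotProductEquiv ℝ (Fin d) u) one_ne_zero
    (fun y hy => (hF ▸ hy : y ∈ {y ∈ P | dotp u y = 1}).2) hne
  refine ⟨fun h => eq_top_of_finrank_eq ?_, fun h => ?_⟩
  · have := (span ℝ F).finrank_le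
    rw [finrank_fin_fun] at this ⊢
    omega
  · rw [h, finrank_top, finrank_fin_fun] at hrank
    omega

namespace IsFacetNormal

theorem eq_sep (hF : IsFacetNormal P F u) : F = {y ∈ P | dotp u y = 1} := hF.2.2.1

theorem dotp_le_one (hF : IsFacetNormal P F u) (hv : v ∈ P) : dotp u v ≤ 1 := hF.2.1 v hv

theorem dotp_eq_one (hF : IsFacetNormal P F u) (hv : v ∈ F) : dotp u v = 1 :=
  (hF.eq_sep ▸ hv : v ∈ {y ∈ P | dotp u y = 1}).2

theorem dim_pos (hF : IsFacetNormal P F u) : 0 < d := by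
  obtain ⟨x, hx⟩ := hF.1
  rw [Nat.pos_iff_ne_zero]
  rintro rfl
  simpa [dotp] using hF.dotp_eq_one hx

theorem isExposed (hF : IsFacetNormal P F u) : IsExposed ℝ P F := by
  rintro ⟨x, hx⟩
  refine ⟨(dotProductEquiv ℝ (Fin d) u).toContinuousLinearMap, ?_⟩
  have hxP : x ∈ P := (hF.eq_sep ▸ hx : x ∈ {y ∈ P | dotp u y = 1}).1
  ext y
  rw [hF.eq_sep]
  refine and_congr_right fun hy => ⟨fun h z hz => ?_, fun h => ?_⟩
  · exact (hF.dotp_le_one hz).trans h.ge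
  · exact (hF.dotp_le_one hy).antisymm ((hF.dotp_eq_one hx).ge.trans (h x hxP))

theorem extremePoints_eq (hF : IsFacetNormal P F u) : extremePoints ℝ F = vertexLevel P u 1 := by
  rw [hF.isExposed.isExtreme.extremePoints_eq]
  ext v
  simp only [hF.eq_sep, vertexLevel, mem_inter_iff, mem_ofPred_eq]
  exact ⟨fun h => ⟨h.2, h.1.2⟩, fun h => ⟨⟨extremePoints_subset h.1, h.2⟩, h.1⟩⟩

theorem ncard_vertexLevel_one (hF : IsFacetNormal P F u) (hs : IsSimplicial P) :
    (vertexLevel P u 1).ncard = d := by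
  rw [← hF.extremePoints_eq, hs F ⟨u, hF⟩]

theorem span_vertexLevel_one (hF : IsFacetNormal P F u) (hP : IsLatticePolytope P) :
    span ℝ (vertexLevel P u 1) = ⊤ := by
  have hspan := (isFacetNormal_iff_span_eq_top.1 hF).2.2.2
  have hfin : (extremePoints ℝ F).Finite :=
    hP.finite_extremePoints.subset hF.isExposed.isExtreme.extremePoints_subset_extremePoints
  rw [← hF.extremePoints_eq, eq_top_iff, ← hspan, span_le]
  nth_rw 1 [← convexHull_extremePoints_eq_of_finite (hF.isExposed.isCompact hP.isCompact)
    (hF.isExposed.convex hP.convex) hfin]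
  exact convexHull_min subset_span (Submodule.convex _)

theorem isLP (hF : IsFacetNormal P F u) (hP : IsLatticePolytope (dualPolytope P)) : IsLP u := by
  have hspan := (isFacetNormal_iff_span_eq_top.1 hF).2.2.2
  rw [hF.eq_sep] at hspan
  exact hP.isLP_of_mem_extremePoints (mem_extremePoints_dualPolytope_of_span_eq_top hF.2.1 hspan)

theorem exists_int_dotp_eq (hF : IsFacetNormal P F u) (hP : IsReflexive P)
    (hv : v ∈ extremePoints ℝ P) : ∃ n : ℤ, dotp u v = n :=
  (hF.isLP hP.2.2).exists_int_dotp_eq (hP.1.isLP_of_mem_extremePoints hv)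

theorem dotp_eq_one_of_pos (hF : IsFacetNormal P F u) (hP : IsReflexive P)
    (hv : v ∈ extremePoints ℝ P) (hpos : 0 < dotp u v) : dotp u v = 1 := by
  obtain ⟨n, hn⟩ := hF.exists_int_dotp_eq hP hv
  have hle := hF.dotp_le_one (extremePoints_subset hv)
  rw [hn] at hpos hle ⊢
  norm_cast at *
  omega

theorem exists_tilted_facet (hF : IsFacetNormal P F u) (hP : IsLatticePolytope P)
    (hgv : 0 ≤ dotp g v) (hg : ∀ b ∈ vertexLevel P u 1, b ≠ v → dotp g b = 0)
    (hneg : ∃ x ∈ extremePoints ℝ P, dotp g x < 0) :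
    ∃ s > (0 : ℝ), IsFacetNormal P {y ∈ P | dotp (u - s • g) y = 1} (u - s • g) := by
  have hle : ∀ z ∈ extremePoints ℝ P, dotp u z ≤ 1 := fun z hz =>
    hF.dotp_le_one (extremePoints_subset hz)
  have hlt : ∀ z ∈ extremePoints ℝ P, dotp g z < 0 → dotp u z < 1 := by
    refine fun z hz hgz => (hle z hz).lt_of_ne fun hz1 => ?_
    rcases eq_or_ne z v with rfl | hzv
    · exact hgz.not_ge hgv
    · exact hgz.ne (hg z ⟨hz, hz1⟩ hzv)
  obtain ⟨s, hs, hvalid, w, hw, hgw, htight⟩ :=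
    exists_pos_sub_mul_le hP.finite_extremePoints hle hlt hneg
  simp only [← dotp_sub_smul] at hvalid htight
  have hwN : w ∈ {y ∈ P | dotp (u - s • g) y = 1} := ⟨extremePoints_subset hw, htight⟩
  refine ⟨s, hs, isFacetNormal_iff_span_eq_top.2
    ⟨⟨w, hwN⟩, hP.dotp_le_of_extremePoints hvalid, rfl, ?_⟩⟩
  have hexchange : span ℝ (insert w (vertexLevel P u 1 \ {v})) = ⊤ :=
    span_insert_sdiff_singleton_eq_top (hF.span_vertexLevel_one hP) (dotProductEquiv ℝ (Fin d) g) hg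
      hgw.ne
  refine eq_top_mono (span_mono (insert_subset hwN ?_)) hexchange
  rintro b ⟨hb, hbv⟩
  exact ⟨extremePoints_subset hb.1, by rw [dotp_sub_smul, hg b hb hbv, hb.2]; simp⟩

theorem subsingleton_vertexLevel_zero_inter_neg (hF : IsFacetNormal P F u) (hP : IsReflexive P)
    (hs : IsSimplicial P) (hv : v ∈ vertexLevel P u 1) (hgv : 0 ≤ dotp g v)
    (hg : ∀ b ∈ vertexLevel P u 1, b ≠ v → dotp g b = 0) :
    {x ∈ vertexLevel P u 0 | dotp g x < 0}.Subsingleton := by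
  rcases eq_empty_or_nonempty {x ∈ vertexLevel P u 0 | dotp g x < 0} with hempty | ⟨x, hx, hgx⟩
  · simp [hempty]
  obtain ⟨s, hspos, hF'⟩ := hF.exists_tilted_facet hP.1 hgv hg ⟨x, hx.1, hgx⟩
  set u' := u - s • g
  have hridge : vertexLevel P u 1 \ {v} ⊆ vertexLevel P u' 1 := by
    rintro b ⟨hb, hbv⟩
    exact ⟨hb.1, by rw [dotp_sub_smul, hg b hb hbv, hb.2]; simp⟩
  have hnew : {x ∈ vertexLevel P u 0 | dotp g x < 0} ⊆
      vertexLevel P u' 1 \ (vertexLevel P u 1 \ {v}) := by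
    rintro y ⟨⟨hyP, hy0⟩, hgy⟩
    refine ⟨⟨hyP, hF'.dotp_eq_one_of_pos hP hyP ?_⟩, fun hy => ?_⟩
    · rw [dotp_sub_smul, hy0, zero_sub, neg_pos]
      exact mul_neg_of_pos_of_neg hspos hgy
    · exact zero_ne_one (hy0.symm.trans hy.1.2)
  have hcard : (vertexLevel P u' 1 \ (vertexLevel P u 1 \ {v})).ncard ≤ 1 := by
    rw [ncard_sdiff hridge (hP.1.finite_vertexLevel _ _).sdiff, ncard_sdiff_singleton_of_mem hv,
      hF'.ncard_vertexLevel_one hs, hF.ncard_vertexLevel_one hs]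
    omega
  have hone := (ncard_le_one (hP.1.finite_vertexLevel _ _).sdiff).1 hcard
  exact fun y hy z hz => hone y (hnew hy) z (hnew hz)

theorem exists_basis_vertexLevel_one (hF : IsFacetNormal P F u) (hP : IsLatticePolytope P)
    (hs : IsSimplicial P) :
    ∃ b : Basis (vertexLevel P u 1) ℝ (Fin d → ℝ), ∀ v, b v = v := by
  have : Fintype (vertexLevel P u 1) := (hP.finite_vertexLevel u 1).fintype
  refine ⟨basisOfTopLeSpanOfCardEqFinrank Subtype.val ?_ ?_, 
    fun v => congrFun (coe_basisOfTopLeSpanOfCardEqFinrank _ _ _) v⟩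
  · rw [Subtype.range_coe, hF.span_vertexLevel_one hP]
  · rw [← Nat.card_eq_fintype_card, Nat.card_coe_set_eq, hF.ncard_vertexLevel_one hs,
      finrank_fin_fun]

theorem ncard_vertexLevel_zero_le (hF : IsFacetNormal P F u) (hP : IsReflexive P)
    (hs : IsSimplicial P) : (vertexLevel P u 0).ncard ≤ d := by
  have := Fin.pos_iff_nonempty.1 hF.dim_pos
  obtain ⟨b, hb⟩ := hF.exists_basis_vertexLevel_one hP.1 hs
  let g (v : vertexLevel P u 1) : Fin d → ℝ := (dotProductEquiv ℝ (Fin d)).symm (b.coord v)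
  have hg : ∀ v x, dotp (g v) x = b.repr x v := fun v x => by
    rw [← dotProductEquiv_apply_eq_dotp, LinearEquiv.apply_symm_apply, Basis.coord_apply]
  have hgb : ∀ v w : vertexLevel P u 1, dotp (g v) w = Finsupp.single w 1 v := fun v w => by
    rw [hg, ← hb w, b.repr_self]
  have hbeyond : ∀ x : vertexLevel P u 0, ∃ v, dotp (g v) x < 0 := by
    rintro ⟨x, hxP, hx0⟩
    have hx_ne : x ≠ 0 := by
      rintro rfl
      exact (disjoint_interior_extremePoints P).notMem_of_mem_left hP.2.1 hxP
    simp only [hg]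
    refine exists_repr_neg_of_map_nonpos b (dotProductEquiv ℝ (Fin d) u) (fun v => ?_) hx_ne hx0.le
    rw [hb, dotProductEquiv_apply_eq_dotp, v.2.2]
    exact one_pos
  choose φ hφ using hbeyond
  have hinj : Function.Injective φ := by
    refine fun x y hxy => Subtype.ext ?_
    refine hF.subsingleton_vertexLevel_zero_inter_neg hP hs (φ x).2 (g := g (φ x)) ?_ ?_
      ⟨x.2, hφ x⟩ ⟨y.2, hxy ▸ hφ y⟩
    · simp [hgb]
    · intro w hw hne
      rw [hgb (φ x) ⟨w, hw⟩, Finsupp.single_eq_of_ne]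
      exact fun h => hne (congrArg Subtype.val h).symm
  have : Finite (vertexLevel P u 1) := hP.1.finite_vertexLevel u 1
  calc (vertexLevel P u 0).ncard ≤ (vertexLevel P u 1).ncard :=
        Nat.card_le_card_of_injective φ hinj
    _ = d := hF.ncard_vertexLevel_one hs

theorem ncard_vertexLevel_of_ncard_eq (hF : IsFacetNormal P F u) (hP : IsReflexive P)
    (hs : IsSimplicial P) (hcard : (extremePoints ℝ P).ncard = 3 * d - 1)
    {V : Finset (Fin d → ℝ)} (hV : (V : Set (Fin d → ℝ)) = extremePoints ℝ P)
    (hν : 0 ≤ dotp u (∑ v ∈ V, v)) :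
    (∀ v ∈ extremePoints ℝ P, -2 ≤ dotp u v) ∧
    (((vertexLevel P u 0).ncard = d ∧ (vertexLevel P u (-1)).ncard = d - 2 ∧
        (vertexLevel P u (-2)).ncard = 1 ∧ dotp u (∑ v ∈ V, v) = 0) ∨
      ((vertexLevel P u 0).ncard = d - 1 ∧ (vertexLevel P u (-1)).ncard = d ∧
        (vertexLevel P u (-2)).ncard = 0 ∧ dotp u (∑ v ∈ V, v) = 0) ∨
      ((vertexLevel P u 0).ncard = d ∧ (vertexLevel P u (-1)).ncard = d - 1 ∧
        (vertexLevel P u (-2)).ncard = 0 ∧ dotp u (∑ v ∈ V, v) = 1)) := by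
  have hmem : ∀ {v}, v ∈ V ↔ v ∈ extremePoints ℝ P := fun {v} => by rw [← hV, Finset.mem_coe]
  choose! h hh using fun v (hv : v ∈ extremePoints ℝ P) => hF.exists_int_dotp_eq hP hv
  have hlevel : ∀ i : ℤ, (vertexLevel P u i).ncard = #{v ∈ V | h v = i} := by
    intro i
    rw [← ncard_coe_finset]
    congr 1
    ext v
    simp only [vertexLevel, Finset.coe_filter, mem_ofPred_eq, hmem]
    exact and_congr_right fun hv => by rw [hh v hv, Int.cast_inj]
  have hsum : dotp u (∑ v ∈ V, v) = (∑ v ∈ V, h v : ℤ) := by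
    rw [← dotProductEquiv_apply_eq_dotp, map_sum, Int.cast_sum]
    exact Finset.sum_congr rfl fun v hv => hh v (hmem.1 hv)
  have hle : ∀ v ∈ V, h v ≤ 1 := by
    intro v hv
    have := hF.dotp_le_one (extremePoints_subset (hmem.1 hv))
    rw [hh v (hmem.1 hv)] at this
    exact_mod_cast this
  have hl1 := hlevel 1
  have hl0 := hlevel 0
  have hlm1 := hlevel (-1)
  have hlm2 := hlevel (-2)
  push_cast at hl1 hl0 hlm1 hlm2
  obtain ⟨hge, hcases⟩ := card_levels_of_card_eq hle hF.dim_pos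
    (by rw [← hcard, ← hV, ncard_coe_finset])
    (hl1 ▸ hF.ncard_vertexLevel_one hs) (hl0 ▸ hF.ncard_vertexLevel_zero_le hP hs)
    (by exact_mod_cast hsum ▸ hν)
  refine ⟨fun v hv => ?_, ?_⟩
  · rw [hh v hv]
    exact_mod_cast hge v (hmem.2 hv)
  · rw [hl0, hlm1, hlm2, hsum]
    exact_mod_cast hcases

theorem vertexLevel_eq_empty (hF : IsFacetNormal P F u)
    (hge : ∀ v ∈ extremePoints ℝ P, -2 ≤ dotp u v) {i : ℤ} (hi : 2 ≤ i ∨ i ≤ -3) :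
    vertexLevel P u i = ∅ := by
  refine eq_empty_of_forall_notMem fun v ⟨hv, hvi⟩ => ?_
  have hle := hF.dotp_le_one (extremePoints_subset hv)
  have hge := hge v hv
  rw [hvi] at hle hge
  norm_cast at hle hge
  omega

end IsFacetNormal

end Facets

/-- for a special facet `F` of a `d`-dimensional simplicial reflexive polytope
with `3d-1` vertices: `H_P(F,i) = ∅` for `i ≥ 2` and `i ≤ -3`, `|H_P(F,1)| = d`, and
`(|H_P(F,0)|, |H_P(F,-1)|, |H_P(F,-2)|)` is `(d, d-2, 1)`, `(d-1, d, 0)` or `(d, d-1, 0)`;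
in the first two cases `ν_P = 0`, in the third `ν_P` is a lattice point on `F`. -/
theorem stmt17 {d : ℕ} (P : Set (Fin d → ℝ)) (hP : IsReflexive P) (hs : IsSimplicial P)
    (hcard : (Set.extremePoints ℝ P).ncard = 3 * d - 1)
    (V : Finset (Fin d → ℝ)) (hV : (V : Set (Fin d → ℝ)) = Set.extremePoints ℝ P)
    (F : Set (Fin d → ℝ)) (u : Fin d → ℝ) (hF : IsFacetNormal P F u)
    (hspec : ∃ t : ℝ, 0 ≤ t ∧ ∃ x ∈ F, (∑ v ∈ V, v) = t • x) :
    (∀ i : ℤ, (2 ≤ i ∨ i ≤ -3) →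
      {v ∈ Set.extremePoints ℝ P | dotp u v = (i : ℝ)} = ∅) ∧
    {v ∈ Set.extremePoints ℝ P | dotp u v = 1}.ncard = d ∧
    (({v ∈ Set.extremePoints ℝ P | dotp u v = 0}.ncard = d ∧
        {v ∈ Set.extremePoints ℝ P | dotp u v = -1}.ncard = d - 2 ∧
        {v ∈ Set.extremePoints ℝ P | dotp u v = -2}.ncard = 1 ∧
        (∑ v ∈ V, v) = 0) ∨
      ({v ∈ Set.extremePoints ℝ P | dotp u v = 0}.ncard = d - 1 ∧
        {v ∈ Set.extremePoints ℝ P | dotp u v = -1}.ncard = d ∧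
        {v ∈ Set.extremePoints ℝ P | dotp u v = -2}.ncard = 0 ∧
        (∑ v ∈ V, v) = 0) ∨
      ({v ∈ Set.extremePoints ℝ P | dotp u v = 0}.ncard = d ∧
        {v ∈ Set.extremePoints ℝ P | dotp u v = -1}.ncard = d - 1 ∧
        {v ∈ Set.extremePoints ℝ P | dotp u v = -2}.ncard = 0 ∧
        (∑ v ∈ V, v) ∈ F ∧ IsLP (∑ v ∈ V, v))) := by
  obtain ⟨t, ht, x, hx, hν⟩ := hspec
  have hνt : dotp u (∑ v ∈ V, v) = t := by
    rw [hν, ← dotProductEquiv_apply_eq_dotp, map_smul, dotProductEquiv_apply_eq_dotp,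
      hF.dotp_eq_one hx, smul_eq_mul, mul_one]
  obtain ⟨hge, hcases⟩ := hF.ncard_vertexLevel_of_ncard_eq hP hs hcard hV (hνt ▸ ht)
  rw [hνt] at hcases
  refine ⟨fun i hi => hF.vertexLevel_eq_empty hge hi, hF.ncard_vertexLevel_one hs, ?_⟩
  rcases hcases with ⟨h0, h1, h2, rfl⟩ | ⟨h0, h1, h2, rfl⟩ | ⟨h0, h1, h2, rfl⟩
  · exact Or.inl ⟨h0, h1, h2, by rw [hν, zero_smul]⟩
  · exact Or.inr (Or.inl ⟨h0, h1, h2, by rw [hν, zero_smul]⟩)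
  · refine Or.inr (Or.inr ⟨h0, h1, h2, by rwa [hν, one_smul], isLP_sum fun v hv => ?_⟩)
    exact hP.1.isLP_of_mem_extremePoints (hV ▸ hv)
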